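/- Let w > 1/4, β = √(w - 1/4), and let y be a real number with -1 ≤ y < 1. Then ∑_{l=0}^∞ (2l+1)·P_l(y)/(l(l+1)+w) = 2·∫_0^∞ e^{-z/2}·cos(βz)/√(e^{-2z} - 2e^{-z}y + 1) dz, where the series converges and the integral converges. Equivalently, the Green's function G = -(1/4π)·∑_{l=0}^∞ (2l+1)P_l(y)/(l(l+1)+w) of the screened Poisson equation on the sphere admits the integral form G = -(1/2π)·∫_0^∞ e^{-z/2}cos(βz)/√(e^{-2z} - 2e^{-z}y + 1) dz. -/

import Mathlib

/-!
Expanding the reciprocal square root in the generating function `∑ P_l(y) t^l = 1 / d(y, t)`, where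
`d(y, t) = √(1 - 2ty + t²)` and `t = e^{-z}`, and integrating term by term gives the series, because
`∫_0^∞ e^{-(l + 1/2)z} cos(βz) dz = (l + 1/2) / ((l + 1/2)² + β²)`. At `y = -1` the series converges
only conditionally, so domination has to come from the partial sums `S_N` of this generating series.
Bonnet's recurrence makes `(d/dt)(S_N d)` collapse to `N t^{N-1} (t P_{N-1} - P_N) / d`, and
`|P_l| ≤ 1`, so `|S_N d - 1| ≤ C t^N` for `N ≥ 1` on `[0, 1]`, with `C` depending only on `y`. This
yields both the pointwise limit and a uniform bound.

The bound `|P_l| ≤ 1` holds because `(P_{l+1} - y P_l)² + (1 - y²) P_l²` does not increase with `l`,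
again by Bonnet's recurrence, and equals `1 - y²` at `l = 0`.
-/

open Filter Topology

/-- The Legendre polynomials `P l` on `ℝ`, i.e. the orthogonal polynomials on `[-1,1]`
normalized by `P l 1 = 1`, defined via the Bonnet recurrence
`P 0 y = 1`, `P 1 y = y`, `(n+2) • P (n+2) y = (2n+3) y P (n+1) y - (n+1) P n y`. -/
noncomputable def legendreP : ℕ → ℝ → ℝ
  | 0, _ => 1
  | 1, y => y
  | (n + 2), y =>
      ((2 * (n : ℝ) + 3) * y * legendreP (n + 1) y - ((n : ℝ) + 1) * legendreP n y) / ((n : ℝ) + 2)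

open MeasureTheory

lemma legendreP_add_two_mul (n : ℕ) (y : ℝ) :
    ((n : ℝ) + 2) * legendreP (n + 2) y =
      (2 * (n : ℝ) + 3) * y * legendreP (n + 1) y - ((n : ℝ) + 1) * legendreP n y := by
  rw [legendreP]
  field_simp

/-- A quadratic form in two consecutive Legendre polynomials, used as a Lyapunov function for
Bonnet's recurrence. -/
noncomputable def legendreEnergy (y : ℝ) (n : ℕ) : ℝ :=
  (legendreP (n + 1) y - y * legendreP n y) ^ 2 + (1 - y ^ 2) * legendreP n y ^ 2

lemma legendreEnergy_antitone (y : ℝ) : Antitone (legendreEnergy y) := by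
  refine antitone_nat_of_succ_le fun n => ?_
  set a := legendreP n y
  set b := legendreP (n + 1) y
  set k : ℝ := (n + 1) / (n + 2) with hk
  have hk_le : k ≤ 1 := (div_le_one (by positivity)).2 (by linarith)
  have hk_sq : k ^ 2 ≤ 1 := pow_le_one₀ (by positivity) hk_le
  have recurrence : legendreP (n + 2) y - y * b = k * (y * b - a) := by
    rw [hk, legendreP]
    field_simp
    ring
  calc legendreEnergy y (n + 1) = k ^ 2 * (y * b - a) ^ 2 + (1 - y ^ 2) * b ^ 2 := by
        rw [legendreEnergy, recurrence, mul_pow]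
    _ ≤ 1 * (y * b - a) ^ 2 + (1 - y ^ 2) * b ^ 2 := by gcongr
    _ = legendreEnergy y n := by
        rw [legendreEnergy]
        ring

lemma legendreEnergy_le (y : ℝ) (n : ℕ) : legendreEnergy y n ≤ 1 - y ^ 2 :=
  (legendreEnergy_antitone y n.zero_le).trans_eq (by simp [legendreEnergy, legendreP])

lemma abs_legendreP_le_one {y : ℝ} (hy : |y| ≤ 1) (n : ℕ) : |legendreP n y| ≤ 1 := by
  rcases hy.lt_or_eq with hlt | heq
  · have hpos : 0 < 1 - y ^ 2 := sub_pos.2 ((sq_lt_one_iff_abs_lt_one y).2 hlt)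
    have hle : (1 - y ^ 2) * legendreP n y ^ 2 ≤ (1 - y ^ 2) * 1 := by
      rw [mul_one]
      exact (le_add_of_nonneg_left (sq_nonneg _)).trans (legendreEnergy_le y n)
    exact (sq_le_one_iff_abs_le_one _).1 (le_of_mul_le_mul_left hle hpos)
  · have hy_sq : 1 - y ^ 2 = 0 := by rw [← sq_abs, heq]; norm_num
    have step (m : ℕ) : legendreP (m + 1) y = y * legendreP m y := by
      have h := legendreEnergy_le y m
      rw [legendreEnergy, hy_sq, zero_mul, add_zero] at h
      exact sub_eq_zero.1 (pow_eq_zero_iff two_ne_zero |>.1 (h.antisymm (sq_nonneg _)))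
    induction n with
    | zero => simp [legendreP]
    | succ m ih => rwa [step, abs_mul, heq, one_mul]

/-- The distance from a unit vector to a point at distance `t` from the origin, `y` being the cosine
of the angle between them. Its reciprocal is the generating function of the Legendre polynomials. -/
noncomputable def chordDist (y t : ℝ) : ℝ :=
  √(1 - 2 * t * y + t ^ 2)

lemma continuous_chordDist (y : ℝ) : Continuous (chordDist y) := by
  unfold chordDist
  fun_prop

lemma chordDist_sq {y t : ℝ} (h : 0 < chordDist y t) :
    chordDist y t ^ 2 = 1 - 2 * t * y + t ^ 2 :=
  Real.sq_sqrt (Real.sqrt_pos.1 h).le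

lemma hasDerivAt_chordDist {y t : ℝ} (h : 0 < chordDist y t) :
    HasDerivAt (chordDist y) ((t - y) / chordDist y t) t := by
  have hquad : HasDerivAt (fun s : ℝ => 1 - 2 * s * y + s ^ 2) (-(2 * y) + 2 * t) t := by
    simpa using!
      ((((hasDerivAt_id t).const_mul 2).mul_const y).const_sub 1).add (hasDerivAt_pow 2 t)
  refine (hquad.sqrt (Real.sqrt_pos.1 h).ne').congr_deriv ?_
  rw [← chordDist]
  field_simp
  ring

lemma sqrt_le_chordDist {y t : ℝ} (hy : |y| ≤ 1) (ht : 0 ≤ t) :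
    √((1 - y) / 2) ≤ chordDist y t := by
  obtain ⟨hy₁, hy₂⟩ := abs_le.1 hy
  refine Real.sqrt_le_sqrt ?_
  linear_combination (1 / 2) * mul_nonneg (neg_le_iff_add_nonneg'.1 hy₁) (sq_nonneg (1 - t)) +
    (1 / 2) * mul_nonneg (sub_nonneg.2 hy₂) (by positivity : 0 ≤ t ^ 2 + 2 * t)

/-- The partial sum, over `l < N`, of the generating function of the Legendre polynomials. -/
noncomputable def legendreSum (y : ℝ) (N : ℕ) (t : ℝ) : ℝ :=
  ∑ l ∈ Finset.range N, legendreP l y * t ^ l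

lemma continuous_legendreSum (y : ℝ) (N : ℕ) : Continuous (legendreSum y N) := by
  unfold legendreSum
  fun_prop

lemma hasDerivAt_legendreSum (y : ℝ) (N : ℕ) (t : ℝ) :
    HasDerivAt (legendreSum y N)
      (∑ l ∈ Finset.range N, legendreP l y * ((l : ℝ) * t ^ (l - 1))) t :=
  HasDerivAt.fun_sum fun l _ => (hasDerivAt_pow l t).const_mul _

lemma legendreSum_differential_eq (y t : ℝ) (N : ℕ) :
    (1 - 2 * t * y + t ^ 2) *
        (∑ l ∈ Finset.range (N + 1), legendreP l y * ((l : ℝ) * t ^ (l - 1))) +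
      (t - y) * legendreSum y (N + 1) t =
    ((N : ℝ) + 1) * t ^ N * (legendreP N y * t - legendreP (N + 1) y) := by
  unfold legendreSum
  induction N with
  | zero => simp [legendreP]
  | succ N ih =>
    rw [Finset.sum_range_succ, Finset.sum_range_succ _ (N + 1), Nat.add_sub_cancel]
    push_cast
    linear_combination ih + t ^ (N + 1) * legendreP_add_two_mul N y

lemma hasDerivAt_legendreSum_mul_chordDist {y t : ℝ} (h : 0 < chordDist y t) (N : ℕ) :
    HasDerivAt (fun s => legendreSum y (N + 1) s * chordDist y s)
      (((N : ℝ) + 1) * t ^ N * (legendreP N y * t - legendreP (N + 1) y) / chordDist y t) t := by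
  refine ((hasDerivAt_legendreSum y (N + 1) t).mul (hasDerivAt_chordDist h)).congr_deriv ?_
  rw [← legendreSum_differential_eq, ← chordDist_sq h]
  field_simp

section

variable {y t : ℝ}

lemma sqrt_half_one_sub_pos (hy : y < 1) : 0 < √((1 - y) / 2) :=
  Real.sqrt_pos.2 (half_pos (sub_pos.2 hy))

lemma chordDist_pos (hy : |y| ≤ 1) (hy' : y < 1) (ht : 0 ≤ t) : 0 < chordDist y t :=
  (sqrt_half_one_sub_pos hy').trans_le (sqrt_le_chordDist hy ht)

lemma abs_legendreP_mul_sub_le_two (hy : |y| ≤ 1) (ht : |t| ≤ 1) (m n : ℕ) :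
    |legendreP m y * t - legendreP n y| ≤ 2 :=
  calc |legendreP m y * t - legendreP n y| ≤ |legendreP m y| * |t| + |legendreP n y| := by
        rw [← abs_mul]
        exact abs_sub _ _
    _ ≤ 1 * 1 + 1 := by
        gcongr <;> exact abs_legendreP_le_one hy _
    _ = 2 := by norm_num

lemma abs_legendreSum_mul_chordDist_sub_one_le (hy : |y| ≤ 1) (hy' : y < 1) (ht₀ : 0 ≤ t)
    (ht₁ : t ≤ 1) (N : ℕ) :
    |legendreSum y (N + 1) t * chordDist y t - 1| ≤ 2 / √((1 - y) / 2) * t ^ (N + 1) := by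
  have := sqrt_half_one_sub_pos hy'
  have hderiv (s : ℝ) (hs : 0 ≤ s) :=
    (hasDerivAt_legendreSum_mul_chordDist (chordDist_pos hy hy' hs) N).sub_const 1
  refine image_norm_le_of_norm_deriv_right_le_deriv_boundary
    (fun s hs => (hderiv s hs.1).continuousAt.continuousWithinAt)
    (fun s hs => (hderiv s hs.1).hasDerivWithinAt)
    (by simp [legendreSum, chordDist, Finset.sum_range_succ', legendreP])
    (fun s => (hasDerivAt_pow (N + 1) s).const_mul (2 / √((1 - y) / 2)))
    (fun s ⟨hs₀, hs⟩ => ?_) ⟨ht₀, le_rfl⟩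
  have hs₁ : |s| ≤ 1 := by rw [abs_of_nonneg hs₀]; exact hs.le.trans ht₁
  rw [Real.norm_eq_abs, abs_div, abs_mul, abs_of_nonneg (by positivity : 0 ≤ ((N : ℝ) + 1) * s ^ N),
    abs_of_pos (chordDist_pos hy hy' hs₀)]
  calc ((N : ℝ) + 1) * s ^ N * |legendreP N y * s - legendreP (N + 1) y| / chordDist y s
      ≤ ((N : ℝ) + 1) * s ^ N * 2 / √((1 - y) / 2) := by
        gcongr
        · exact abs_legendreP_mul_sub_le_two hy hs₁ _ _
        · exact sqrt_le_chordDist hy hs₀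
    _ = 2 / √((1 - y) / 2) * (((N + 1 : ℕ) : ℝ) * s ^ (N + 1 - 1)) := by
        rw [Nat.add_sub_cancel]
        push_cast
        ring

lemma tendsto_legendreSum (hy : |y| ≤ 1) (hy' : y < 1) (ht₀ : 0 ≤ t) (ht₁ : t < 1) :
    Tendsto (fun N => legendreSum y (N + 1) t) atTop (𝓝 (chordDist y t)⁻¹) := by
  have hpow : Tendsto (fun N : ℕ => 2 / √((1 - y) / 2) * t ^ (N + 1)) atTop (𝓝 0) := by
    simpa using ((tendsto_pow_atTop_nhds_zero_of_lt_one ht₀ ht₁).comp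
      (tendsto_add_atTop_nat 1)).const_mul (2 / √((1 - y) / 2))
  have hprod : Tendsto (fun N => legendreSum y (N + 1) t * chordDist y t) atTop (𝓝 1) :=
    tendsto_iff_norm_sub_tendsto_zero.2 <| squeeze_zero (fun _ => norm_nonneg _)
      (abs_legendreSum_mul_chordDist_sub_one_le hy hy' ht₀ ht₁.le) hpow
  simpa [(chordDist_pos hy hy' ht₀).ne'] using hprod.mul_const (chordDist y t)⁻¹

lemma abs_legendreSum_le (hy : |y| ≤ 1) (hy' : y < 1) (ht₀ : 0 ≤ t) (ht₁ : t ≤ 1) (N : ℕ) :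
    |legendreSum y (N + 1) t| ≤ (1 + 2 / √((1 - y) / 2)) / √((1 - y) / 2) := by
  have hc := sqrt_half_one_sub_pos hy'
  rw [le_div_iff₀ hc]
  calc |legendreSum y (N + 1) t| * √((1 - y) / 2)
      ≤ |legendreSum y (N + 1) t| * chordDist y t := by
        gcongr
        exact sqrt_le_chordDist hy ht₀
    _ = |1 + (legendreSum y (N + 1) t * chordDist y t - 1)| := by
        rw [add_sub_cancel, abs_mul, abs_of_pos (chordDist_pos hy hy' ht₀)]
    _ ≤ 1 + 2 / √((1 - y) / 2) * t ^ (N + 1) := by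
        refine (abs_add_le _ _).trans ?_
        rw [abs_one]
        gcongr
        exact abs_legendreSum_mul_chordDist_sub_one_le hy hy' ht₀ ht₁ N
    _ ≤ 1 + 2 / √((1 - y) / 2) := by
        gcongr
        exact mul_le_of_le_one_right (by positivity) (pow_le_one₀ ht₀ ht₁)

end

section

variable {α E : Type*} [MeasurableSpace α] {μ : Measure α} [NormedAddCommGroup E] [NormedSpace ℝ E]
  {f : α → E} {t : α → ℝ} {y : ℝ}

lemma integrable_inv_chordDist_smul (hy : |y| ≤ 1) (hy' : y < 1) (hf : Integrable f μ)
    (ht : AEStronglyMeasurable t μ) (ht₀ : ∀ᵐ x ∂μ, 0 ≤ t x) :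
    Integrable (fun x => (chordDist y (t x))⁻¹ • f x) μ := by
  refine hf.bdd_smul (√((1 - y) / 2))⁻¹ ?_ ?_
  · have hdist := (continuous_chordDist y).comp_aestronglyMeasurable ht
    exact hdist.aemeasurable.inv.aestronglyMeasurable
  · filter_upwards [ht₀] with x hx
    rw [norm_inv, Real.norm_of_nonneg (chordDist_pos hy hy' hx).le]
    exact inv_anti₀ (sqrt_half_one_sub_pos hy') (sqrt_le_chordDist hy hx)

lemma integral_legendreSum_smul (hf : Integrable f μ) (ht : AEStronglyMeasurable t μ)
    (ht₁ : ∀ᵐ x ∂μ, |t x| ≤ 1) (N : ℕ) :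
    ∫ x, legendreSum y N (t x) • f x ∂μ =
      ∑ l ∈ Finset.range N, legendreP l y • ∫ x, t x ^ l • f x ∂μ := by
  have hint (l : ℕ) : Integrable (fun x => t x ^ l • f x) μ := by
    refine hf.bdd_smul 1 (ht.pow l) ?_
    filter_upwards [ht₁] with x hx
    rw [norm_pow]
    exact pow_le_one₀ (norm_nonneg _) hx
  simp only [legendreSum, Finset.sum_smul, mul_smul]
  rw [integral_finsetSum _ fun l _ => (hint l).fun_smul (legendreP l y)]
  simp only [integral_smul]

theorem tendsto_sum_legendreP_smul_integral_pow_smul (hy : |y| ≤ 1) (hy' : y < 1)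
    (hf : Integrable f μ) (ht : AEStronglyMeasurable t μ) (ht_mem : ∀ᵐ x ∂μ, t x ∈ Set.Ico 0 1) :
    Tendsto (fun N => ∑ l ∈ Finset.range N, legendreP l y • ∫ x, t x ^ l • f x ∂μ) atTop
      (𝓝 (∫ x, (chordDist y (t x))⁻¹ • f x ∂μ)) := by
  have ht_abs : ∀ᵐ x ∂μ, |t x| ≤ 1 := by
    filter_upwards [ht_mem] with x hx
    exact (abs_of_nonneg hx.1).trans_le hx.2.le
  rw [← tendsto_add_atTop_iff_nat 1]
  simp only [← integral_legendreSum_smul hf ht ht_abs]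
  refine tendsto_integral_of_dominated_convergence
    (fun x => (1 + 2 / √((1 - y) / 2)) / √((1 - y) / 2) * ‖f x‖) (fun N => ?_)
    (hf.norm.const_mul _) (fun N => ?_) ?_
  · exact ((continuous_legendreSum y _).comp_aestronglyMeasurable ht).smul hf.aestronglyMeasurable
  · filter_upwards [ht_mem] with x hx
    rw [norm_smul]
    gcongr
    exact abs_legendreSum_le hy hy' hx.1 hx.2.le N
  · filter_upwards [ht_mem] with x hx
    exact (tendsto_legendreSum hy hy' hx.1 hx.2).smul_const (f x)

end

lemma re_exp_neg_add_mul_I_mul (a b z : ℝ) :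
    (Complex.exp ((-a + b * Complex.I) * z)).re = Real.exp (-a * z) * Real.cos (b * z) := by
  simp [Complex.exp_re]

lemma integrableOn_exp_neg_mul_mul_cos_Ioi {a : ℝ} (b : ℝ) (ha : 0 < a) :
    IntegrableOn (fun z : ℝ => Real.exp (-a * z) * Real.cos (b * z)) (Set.Ioi 0) := by
  have hre : (-a + b * Complex.I : ℂ).re < 0 := by simpa using ha
  simpa only [IntegrableOn, RCLike.re_to_complex, re_exp_neg_add_mul_I_mul] using
    (integrableOn_exp_mul_complex_Ioi hre 0).re

lemma integral_exp_neg_mul_mul_cos_Ioi {a : ℝ} (b : ℝ) (ha : 0 < a) :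
    ∫ z in Set.Ioi (0 : ℝ), Real.exp (-a * z) * Real.cos (b * z) = a / (a ^ 2 + b ^ 2) := by
  have hre : (-a + b * Complex.I : ℂ).re < 0 := by simpa using ha
  have h := integral_re (integrableOn_exp_mul_complex_Ioi hre 0)
  simp only [RCLike.re_to_complex, re_exp_neg_add_mul_I_mul] at h
  rw [h, integral_exp_mul_complex_Ioi hre]
  simp [Complex.div_re, Complex.normSq_apply]
  ring

lemma exp_neg_pow_mul_exp_neg_half_mul_cos (b z : ℝ) (l : ℕ) :
    Real.exp (-z) ^ l * (Real.exp (-z / 2) * Real.cos (b * z)) =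
      Real.exp (-((l : ℝ) + 1 / 2) * z) * Real.cos (b * z) := by
  rw [← Real.exp_nat_mul, ← mul_assoc, ← Real.exp_add]
  congr 2
  ring

lemma chordDist_exp_neg (y z : ℝ) :
    chordDist y (Real.exp (-z)) = √(Real.exp (-2 * z) - 2 * Real.exp (-z) * y + 1) := by
  have hsq : Real.exp (-2 * z) = Real.exp (-z) ^ 2 := by
    rw [← Real.exp_nat_mul]
    congr 1
    push_cast
    ring
  rw [chordDist, hsq]
  congr 1
  ring

/-- For `w > 1/4`, `β = √(w - 1/4)`, `-1 ≤ y < 1`: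
`∑ (2l+1) P l y / (l(l+1)+w) = 2 ∫_0^∞ e^{-z/2} cos(βz)/√(e^{-2z} - 2e^{-z} y + 1) dz`,
where the series converges (partial sums tend to the integral) and the integral converges. -/
theorem screened_green_integral_form (w : ℝ) (hw : 1 / 4 < w)
    (β : ℝ) (hβ : β = Real.sqrt (w - 1 / 4))
    (y : ℝ) (hy₁ : -1 ≤ y) (hy₂ : y < 1) :
    MeasureTheory.IntegrableOn
      (fun z : ℝ => Real.exp (-z / 2) * Real.cos (β * z) /
        Real.sqrt (Real.exp (-2 * z) - 2 * Real.exp (-z) * y + 1)) (Set.Ioi 0) ∧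
    Tendsto (fun N : ℕ => ∑ l ∈ Finset.range N,
        (2 * (l : ℝ) + 1) * legendreP l y / ((l : ℝ) * ((l : ℝ) + 1) + w)) atTop
      (𝓝 (2 * ∫ z in Set.Ioi (0 : ℝ), Real.exp (-z / 2) * Real.cos (β * z) /
        Real.sqrt (Real.exp (-2 * z) - 2 * Real.exp (-z) * y + 1))) := by
  have hy : |y| ≤ 1 := abs_le.2 ⟨hy₁, hy₂.le⟩
  have hβ_sq : β ^ 2 = w - 1 / 4 := by
    rw [hβ]
    exact Real.sq_sqrt (by linarith)
  have hf : IntegrableOn (fun z => Real.exp (-z / 2) * Real.cos (β * z)) (Set.Ioi 0) := by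
    simpa [neg_div, div_eq_inv_mul] using integrableOn_exp_neg_mul_mul_cos_Ioi β one_half_pos
  have ht : AEStronglyMeasurable (fun z => Real.exp (-z)) (volume.restrict (Set.Ioi 0)) := by
    fun_prop
  have ht_mem : ∀ᵐ z ∂volume.restrict (Set.Ioi 0), Real.exp (-z) ∈ Set.Ico 0 1 :=
    (ae_restrict_mem measurableSet_Ioi).mono fun z hz =>
      ⟨(Real.exp_pos _).le, Real.exp_lt_one_iff.2 (neg_neg_of_pos hz)⟩
  simp only [← chordDist_exp_neg, div_eq_inv_mul (Real.exp _ * _)]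
  refine ⟨integrable_inv_chordDist_smul hy hy₂ hf ht (ht_mem.mono fun _ h => h.1), ?_⟩
  refine ((tendsto_sum_legendreP_smul_integral_pow_smul hy hy₂ hf ht ht_mem).const_mul 2).congr
    fun N => ?_
  rw [Finset.mul_sum]
  refine Finset.sum_congr rfl fun l _ => ?_
  simp only [smul_eq_mul, exp_neg_pow_mul_exp_neg_half_mul_cos]
  rw [integral_exp_neg_mul_mul_cos_Ioi β (by positivity), hβ_sq]
  ring_nf
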